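/- Let d, n ≥ 1, M > 0, 0 < r ≤ M, ε ∈ (0,1), and set C(M) = 1 + (M²/2)·e^{M²} and a = C(M)·ε²·r²/√d. Let Y = Σ_{j=1}^d W_j with W₁,…,W_d i.i.d. Rademacher random variables. If n·a ≤ 1/4, then E[ (1 + ε²·(e^{(r²/d)·Y} − 1))^n ] ≤ h(1/4) ≤ 3, where h(x) = e^x·(1 + 4x·e^{−1/2}/(1 − 2x)) for x ∈ [0, 1/2), a function which is nondecreasing on [0, 1/2). -/

import Mathlib

open MeasureTheory Real

noncomputable section

/-- The Rademacher distribution on `ℝ`: `P({1}) = P({-1}) = 1/2`. -/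
def radem : Measure ℝ :=
  (2 : ENNReal)⁻¹ • Measure.dirac (1 : ℝ) + (2 : ENNReal)⁻¹ • Measure.dirac (-1 : ℝ)

/-- The function `h(x) = e^x·(1 + 4x·e^{-1/2}/(1-2x))`. -/
def hFun (x : ℝ) : ℝ := Real.exp x * (1 + 4 * x / (1 - 2 * x) * Real.exp (-(1 / 2)))

instance : IsProbabilityMeasure radem :=
  ⟨by simp [radem, ENNReal.inv_two_add_inv_two]⟩

lemma ae_radem_abs_le_one : ∀ᵐ x ∂radem, |x| ≤ 1 := by
  have hs : MeasurableSet {x : ℝ | |x| ≤ 1} := measurableSet_le (by fun_prop) (by fun_prop)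
  have h2 : (2 : ENNReal)⁻¹ ≠ 0 := by simp
  rw [radem, ae_add_measure_iff, Measure.ae_ennreal_smul_measure_iff h2,
    Measure.ae_ennreal_smul_measure_iff h2, ae_dirac_iff hs, ae_dirac_iff hs]
  simp

lemma integrable_radem (f : ℝ → ℝ) : Integrable f radem := by
  have h (a : ℝ) : Integrable f ((2 : ENNReal)⁻¹ • Measure.dirac a) :=
    (integrable_dirac (by simp)).smul_measure (by simp)
  exact (h 1).add_measure (h (-1))

lemma integral_exp_mul_radem (c : ℝ) : ∫ x, exp (c * x) ∂radem = cosh c := by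
  have h (a : ℝ) :
      Integrable (fun x => exp (c * x)) ((2 : ENNReal)⁻¹ • Measure.dirac a) :=
    (integrable_dirac (by simp)).smul_measure (by simp)
  rw [radem, integral_add_measure (h 1) (h (-1)), integral_smul_measure, integral_smul_measure,
    integral_dirac, integral_dirac, cosh_eq]
  simp
  ring

/-- The sum of `d` independent Rademacher variables is subgaussian with variance proxy `d`. -/
lemma lintegral_exp_mul_sum_radem_le (d : ℕ) (c : ℝ) :
    ∫⁻ w : Fin d → ℝ, ENNReal.ofReal (exp (c * ∑ j, w j)) ∂(Measure.pi fun _ => radem) ≤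
      ENNReal.ofReal (exp (d * c ^ 2 / 2)) := by
  have hprod (w : Fin d → ℝ) : exp (c * ∑ j, w j) = ∏ j, exp (c * w j) := by
    rw [Finset.mul_sum, exp_sum]
  have hint : Integrable (fun w : Fin d → ℝ => ∏ j, exp (c * w j))
      (Measure.pi fun _ => radem) :=
    Integrable.fintype_prod (f := fun _ x => exp (c * x)) fun _ => integrable_radem _
  simp_rw [hprod]
  rw [← ofReal_integral_eq_lintegral_ofReal hint
    (.of_forall fun w => Finset.prod_nonneg fun _ _ => (exp_pos _).le)]
  refine ENNReal.ofReal_le_ofReal ?_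
  rw [integral_fintype_prod_eq_prod (fun (_ : Fin d) (x : ℝ) => exp (c * x))]
  simp only [integral_exp_mul_radem, Finset.prod_const, Finset.card_univ, Fintype.card_fin]
  calc cosh c ^ d ≤ exp (c ^ 2 / 2) ^ d :=
        pow_le_pow_left₀ (cosh_pos c).le (cosh_le_exp_half_sq c) d
    _ = exp (d * c ^ 2 / 2) := by rw [← exp_nat_mul]; ring_nf

lemma lintegral_ofReal_exp_neg_mul_sq {b : ℝ} (hb : 0 < b) :
    ∫⁻ x : ℝ, ENNReal.ofReal (exp (-b * x ^ 2)) = ENNReal.ofReal √(π / b) := by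
  rw [← ofReal_integral_eq_lintegral_ofReal (integrable_exp_neg_mul_sq hb)
    (.of_forall fun _ => (exp_pos _).le), integral_gaussian]

/-- Gaussian linearization of the exponential of a square. -/
lemma lintegral_ofReal_exp_neg_sq_add_mul (z : ℝ) :
    ∫⁻ x : ℝ, ENNReal.ofReal (exp (-x ^ 2 + x * z)) =
      ENNReal.ofReal √π * ENNReal.ofReal (exp (z ^ 2 / 4)) := by
  have h (x : ℝ) : ENNReal.ofReal (exp (-x ^ 2 + x * z)) =
      ENNReal.ofReal (exp (-1 * (x - z / 2) ^ 2)) * ENNReal.ofReal (exp (z ^ 2 / 4)) := by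
    rw [← ENNReal.ofReal_mul (exp_pos _).le, ← exp_add]
    ring_nf
  simp_rw [h]
  rw [lintegral_mul_const _ (by fun_prop),
    lintegral_sub_right_eq_self (fun x : ℝ => ENNReal.ofReal (exp (-1 * x ^ 2))),
    lintegral_ofReal_exp_neg_mul_sq one_pos, div_one]

lemma lintegral_exp_sq_sum_radem_le {d : ℕ} (hd : 1 ≤ d) :
    ∫⁻ w : Fin d → ℝ, ENNReal.ofReal (exp ((∑ j, w j) ^ 2 / d / 4))
      ∂(Measure.pi fun _ => radem) ≤ ENNReal.ofReal √2 := by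
  have hd0 : (0 : ℝ) < d := by exact_mod_cast hd
  have hs : √(d : ℝ) ^ 2 = d := sq_sqrt hd0.le
  have hs0 : 0 < √(d : ℝ) := sqrt_pos.2 hd0
  have hπ : ENNReal.ofReal √π ≠ 0 := by simpa using pi_pos
  rw [← ENNReal.mul_le_mul_iff_right hπ ENNReal.ofReal_ne_top,
    ← lintegral_const_mul _ (by fun_prop)]
  have hlin (w : Fin d → ℝ) :
      ENNReal.ofReal √π * ENNReal.ofReal (exp ((∑ j, w j) ^ 2 / d / 4)) =
        ∫⁻ x : ℝ, ENNReal.ofReal (exp (-x ^ 2 + x * ((∑ j, w j) / √d))) := by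
    rw [lintegral_ofReal_exp_neg_sq_add_mul, div_pow, hs]
  simp_rw [hlin]
  rw [lintegral_lintegral_swap (by fun_prop)]
  calc ∫⁻ x : ℝ, ∫⁻ w : Fin d → ℝ, ENNReal.ofReal (exp (-x ^ 2 + x * ((∑ j, w j) / √d)))
        ∂(Measure.pi fun _ => radem)
      ≤ ∫⁻ x : ℝ, ENNReal.ofReal (exp (-(1 / 2) * x ^ 2)) := by
        refine lintegral_mono fun x => ?_
        have hsplit (w : Fin d → ℝ) : ENNReal.ofReal (exp (-x ^ 2 + x * ((∑ j, w j) / √d))) =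
            ENNReal.ofReal (exp (-x ^ 2)) * ENNReal.ofReal (exp (x / √d * ∑ j, w j)) := by
          rw [← ENNReal.ofReal_mul (exp_pos _).le, ← exp_add]
          ring_nf
        simp_rw [hsplit]
        rw [lintegral_const_mul _ (by fun_prop)]
        refine (mul_le_mul_right (lintegral_exp_mul_sum_radem_le d (x / √d)) _).trans_eq ?_
        rw [← ENNReal.ofReal_mul (exp_pos _).le, ← exp_add, div_pow, hs]
        congr 2
        field_simp
        ring
    _ = ENNReal.ofReal √π * ENNReal.ofReal √2 := by
        rw [lintegral_ofReal_exp_neg_mul_sq (by norm_num), ← ENNReal.ofReal_mul (sqrt_nonneg _),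
          ← sqrt_mul pi_pos.le]
        congr 2
        ring

lemma exp_sub_one_sub_self_le_of_nonneg {t : ℝ} (ht : 0 ≤ t) :
    exp t - 1 - t ≤ exp t / 2 * t ^ 2 := by
  have hderiv (x : ℝ) : HasDerivAt (fun x : ℝ => x ^ 2 / 2 + (1 + x) * exp (-x))
      (x * (1 - exp (-x))) x := by
    have h1 : HasDerivAt (fun x : ℝ => x ^ 2 / 2) x x := by
      simpa using (hasDerivAt_pow 2 x).div_const 2
    have h2 : HasDerivAt (fun x : ℝ => exp (-x)) (-exp (-x)) x := by
      simpa using (hasDerivAt_neg x).exp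
    exact (h1.add (((hasDerivAt_id' x).const_add 1).mul h2)).congr_deriv (by ring)
  have hmono : MonotoneOn (fun x : ℝ => x ^ 2 / 2 + (1 + x) * exp (-x)) (Set.Ici 0) := by
    refine monotoneOn_of_deriv_nonneg (convex_Ici 0) (by fun_prop)
      (fun x _ => (hderiv x).differentiableAt.differentiableWithinAt) fun x hx => ?_
    rw [interior_Ici, Set.mem_Ioi] at hx
    rw [(hderiv x).deriv]
    exact mul_nonneg hx.le (sub_nonneg.2 (exp_le_one_iff.2 (by linarith)))
  have h := hmono Set.self_mem_Ici (Set.mem_Ici.2 ht) ht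
  have hexp : exp t * exp (-t) = 1 := by rw [← exp_add]; simp
  simp only [neg_zero, exp_zero] at h
  nlinarith [mul_le_mul_of_nonneg_left h (exp_pos t).le]

lemma exp_sub_one_le_of_abs_le {u B : ℝ} (hu : |u| ≤ B) :
    exp u - 1 ≤ u + exp B / 2 * u ^ 2 := by
  have h := Complex.norm_exp_sub_sum_le_exp_norm_sub_sum (u : ℂ) 2
  simp only [Finset.sum_range_succ, Finset.sum_range_zero, pow_zero, pow_one, Nat.factorial,
    Complex.norm_real, norm_eq_abs] at h
  norm_num at h
  norm_cast at h
  rw [norm_eq_abs] at h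
  have h1 := exp_sub_one_sub_self_le_of_nonneg (abs_nonneg u)
  have h2 : exp |u| ≤ exp B := exp_le_exp.2 hu
  rw [sq_abs] at h1
  nlinarith [le_abs_self (exp u - (1 + u)), sq_nonneg u]

lemma pow_one_add_sq_mul_exp_sub_one_le {d n : ℕ} (hd : 1 ≤ d) {M r ε S : ℝ} (hr0 : 0 < r)
    (hrM : r ≤ M) (hε : ε ∈ Set.Ioo (0 : ℝ) 1) (hS : |S| ≤ d)
    (ha : (n : ℝ) * ((1 + M ^ 2 / 2 * exp (M ^ 2)) * ε ^ 2 * r ^ 2 / √d) ≤ 1 / 4) :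
    (1 + ε ^ 2 * (exp (r ^ 2 / d * S) - 1)) ^ n ≤ exp (1 / 4) * exp (S ^ 2 / d / 4) := by
  have hd1 : (1 : ℝ) ≤ d := by exact_mod_cast hd
  have hd0 : (0 : ℝ) < d := by linarith
  have hs : √(d : ℝ) ^ 2 = d := sq_sqrt hd0.le
  have hs1 : 1 ≤ √(d : ℝ) := one_le_sqrt.2 hd1
  have hs0 : 0 < √(d : ℝ) := by linarith
  have hrM2 : r ^ 2 ≤ M ^ 2 := pow_le_pow_left₀ hr0.le hrM 2
  set Z := S / √d with hZ
  set b := r ^ 2 / √d with hb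
  have hb0 : 0 ≤ b := by positivity
  have hbM : b ≤ M ^ 2 := (div_le_self (sq_nonneg r) hs1).trans hrM2
  have hu : r ^ 2 / d * S = b * Z := by
    rw [hb, hZ, div_mul_div_comm, ← sq, hs]
    ring
  have hZ2 : S ^ 2 / d = Z ^ 2 := by rw [hZ, div_pow, hs]
  have hu_abs : |b * Z| ≤ M ^ 2 := by
    rw [← hu, abs_mul, abs_of_nonneg (by positivity)]
    calc r ^ 2 / d * |S| ≤ r ^ 2 / d * d := by gcongr
      _ = r ^ 2 := by field_simp
      _ ≤ M ^ 2 := hrM2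
  have hexp := exp_sub_one_le_of_abs_le hu_abs
  rw [hu, hZ2]
  set K := exp (M ^ 2) with hK
  have hK0 : 0 < K := exp_pos _
  have hquad : b * Z + K / 2 * (b * Z) ^ 2 ≤ (1 + M ^ 2 / 2 * K) * b * (1 + Z ^ 2) := by
    have h1 : b * Z ≤ b * (1 + Z ^ 2) := by
      gcongr
      nlinarith [sq_nonneg (Z - 1), sq_nonneg Z]
    have h2 : K / 2 * (b * Z) ^ 2 ≤ M ^ 2 / 2 * K * b * (1 + Z ^ 2) := by
      calc K / 2 * (b * Z) ^ 2 = K / 2 * b * (b * Z ^ 2) := by ring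
        _ ≤ K / 2 * b * (M ^ 2 * (1 + Z ^ 2)) := by
          gcongr
          linarith
        _ = _ := by ring
    linarith
  have hbase : 0 ≤ 1 + ε ^ 2 * (exp (b * Z) - 1) := by
    have : ε ^ 2 ≤ 1 := pow_le_one₀ hε.1.le hε.2.le
    nlinarith [mul_nonneg (sq_nonneg ε) (exp_pos (b * Z)).le]
  calc (1 + ε ^ 2 * (exp (b * Z) - 1)) ^ n
      ≤ exp (ε ^ 2 * (exp (b * Z) - 1)) ^ n :=
        pow_le_pow_left₀ hbase (by linarith [add_one_le_exp (ε ^ 2 * (exp (b * Z) - 1))]) n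
    _ = exp (n * (ε ^ 2 * (exp (b * Z) - 1))) := (exp_nat_mul _ n).symm
    _ ≤ exp (1 / 4 * (1 + Z ^ 2)) := by
        refine exp_le_exp.2 ?_
        calc (n : ℝ) * (ε ^ 2 * (exp (b * Z) - 1))
            ≤ n * (ε ^ 2 * ((1 + M ^ 2 / 2 * K) * b * (1 + Z ^ 2))) := by
              gcongr
              exact hexp.trans hquad
          _ = n * ((1 + M ^ 2 / 2 * K) * ε ^ 2 * r ^ 2 / √d) * (1 + Z ^ 2) := by
              rw [hb]
              ring
          _ ≤ 1 / 4 * (1 + Z ^ 2) := by gcongr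
    _ = exp (1 / 4) * exp (Z ^ 2 / 4) := by
        rw [← exp_add]
        ring_nf

lemma exp_quarter_mul_sqrt_two_le_hFun : exp (1 / 4) * √2 ≤ hFun (1 / 4) := by
  have h1 : (1 : ℝ) / 2 ≤ exp (-(1 / 2)) := by linarith [add_one_le_exp (-(1 / 2) : ℝ)]
  have h2 : √2 ≤ 2 := by rw [sqrt_le_left (by norm_num)]; norm_num
  rw [hFun]
  gcongr
  norm_num at h1 ⊢
  linarith

lemma hFun_quarter_le_three : hFun (1 / 4) ≤ 3 := by
  have h1 : 1 ≤ exp (1 / 4) := one_le_exp (by norm_num)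
  have h2 : exp (1 / 4) ≤ 2 := by
    calc exp (1 / 4) ≤ exp (log 2) := exp_le_exp.2 (by linarith [log_two_gt_d9])
      _ = 2 := exp_log (by norm_num)
  have h3 : exp (-(1 / 2)) = (exp (1 / 4))⁻¹ ^ 2 := by
    rw [← exp_neg, ← exp_nat_mul]
    norm_num
  rw [hFun, h3]
  have h0 : 0 < exp (1 / 4) := exp_pos _
  generalize exp (1 / 4) = t at *
  have : t * (1 + 4 * (1 / 4) / (1 - 2 * (1 / 4)) * t⁻¹ ^ 2) = (t ^ 2 + 2) / t := by
    field_simp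
    ring
  rw [this, div_le_iff₀ h0]
  nlinarith

lemma monotoneOn_hFun : MonotoneOn hFun (Set.Ico (0 : ℝ) (1 / 2)) := by
  intro x hx y hy hxy
  have hx0 : 0 ≤ x := hx.1
  have hx1 : 0 < 1 - 2 * x := by linarith [hx.2]
  have hy1 : 0 < 1 - 2 * y := by linarith [hy.2]
  have hy0 : 0 ≤ y := hy.1
  unfold hFun
  gcongr

/-- **Second-moment bound for the Rademacher mixture.**
With `C(M) = 1 + (M²/2)e^{M²}` and `a = C(M)ε²r²/√d`, if `n·a ≤ 1/4` then
`E[(1 + ε²(e^{(r²/d)Y} - 1))ⁿ] ≤ h(1/4) ≤ 3`, where `Y = Σⱼ Wⱼ` is a sum of `d` i.i.d.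
Rademacher random variables; moreover `h` is nondecreasing on `[0, 1/2)`. -/
theorem radem_secondMoment_bound (d n : ℕ) (hd : 1 ≤ d) (hn : 1 ≤ n)
    (M r ε : ℝ) (hM : 0 < M) (hr0 : 0 < r) (hrM : r ≤ M) (hε : ε ∈ Set.Ioo (0 : ℝ) 1)
    (ha : (n : ℝ) * ((1 + M ^ 2 / 2 * Real.exp (M ^ 2)) * ε ^ 2 * r ^ 2 / Real.sqrt d)
      ≤ 1 / 4) :
    (∫ w : Fin d → ℝ, (1 + ε ^ 2 * (Real.exp (r ^ 2 / d * ∑ j, w j) - 1)) ^ n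
        ∂(Measure.pi fun _ : Fin d => radem)) ≤ hFun (1 / 4) ∧
    hFun (1 / 4) ≤ 3 ∧
    MonotoneOn hFun (Set.Ico (0 : ℝ) (1 / 2)) := by
  refine ⟨?_, hFun_quarter_le_three, monotoneOn_hFun⟩
  have hB : 0 ≤ Real.exp (1 / 4) * √2 := by positivity
  refine le_trans ?_ exp_quarter_mul_sqrt_two_le_hFun
  have hε2 : ε ^ 2 ≤ 1 := pow_le_one₀ hε.1.le hε.2.le
  have hbase (w : Fin d → ℝ) :
      0 ≤ (1 + ε ^ 2 * (Real.exp (r ^ 2 / d * ∑ j, w j) - 1)) ^ n := by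
    refine pow_nonneg ?_ n
    nlinarith [mul_nonneg (sq_nonneg ε) (exp_pos (r ^ 2 / d * ∑ j, w j)).le]
  have hbound : ∀ᵐ w : Fin d → ℝ ∂(Measure.pi fun _ => radem), |∑ j, w j| ≤ d := by
    have hcoord : ∀ᵐ w : Fin d → ℝ ∂(Measure.pi fun _ => radem), ∀ j, |w j| ≤ 1 :=
      ae_all_iff.2 fun j =>
        (Measure.quasiMeasurePreserving_eval (fun _ : Fin d => radem) j).ae ae_radem_abs_le_one
    filter_upwards [hcoord] with w hw
    calc |∑ j, w j| ≤ ∑ j, |w j| := Finset.abs_sum_le_sum_abs _ _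
      _ ≤ ∑ _j : Fin d, (1 : ℝ) := Finset.sum_le_sum fun j _ => hw j
      _ = d := by simp
  rw [integral_eq_lintegral_of_nonneg_ae (.of_forall hbase)
    (Measurable.aestronglyMeasurable (by fun_prop))]
  refine ENNReal.toReal_le_of_le_ofReal hB ?_
  calc ∫⁻ w : Fin d → ℝ,
        ENNReal.ofReal ((1 + ε ^ 2 * (Real.exp (r ^ 2 / d * ∑ j, w j) - 1)) ^ n)
        ∂(Measure.pi fun _ => radem)
      ≤ ∫⁻ w : Fin d → ℝ, ENNReal.ofReal (Real.exp (1 / 4)) *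
          ENNReal.ofReal (Real.exp ((∑ j, w j) ^ 2 / d / 4)) ∂(Measure.pi fun _ => radem) := by
        refine lintegral_mono_ae ?_
        filter_upwards [hbound] with w hw
        rw [← ENNReal.ofReal_mul (exp_pos _).le]
        exact ENNReal.ofReal_le_ofReal
          (pow_one_add_sq_mul_exp_sub_one_le hd hr0 hrM hε hw ha)
    _ ≤ ENNReal.ofReal (Real.exp (1 / 4)) * ENNReal.ofReal √2 := by
        rw [lintegral_const_mul _ (by fun_prop)]
        exact mul_le_mul_right (lintegral_exp_sq_sum_radem_le hd) _
    _ = ENNReal.ofReal (Real.exp (1 / 4) * √2) :=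
        (ENNReal.ofReal_mul (exp_pos _).le).symm

end
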